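/- The complete bipartite graph K_{3,7} is not almost planar. -/

import Mathlib

/-!
The seven vertices `v` of the larger part each carry a star of three edges to `a 0`, `a 1`, `a 2`.
Two ingredients carry the proof.

**Topology** (`K33_independent_crossing`). If `K_{3,3}` is mapped continuously to the plane, two
independent edges meet. Otherwise, for independent edges `c`, `d`, the function `c s - d t` has a
continuous logarithm on the square `[0,1]²`, so the total change of that logarithm around the
boundary of the square is zero. This gives 18 linear relations between the changes of
`log (c - p)`, for `c` an edge and `p` a vertex off `c`. A suitable signed sum of the relations
contains each change with coefficient `0` or `±2`; halving it and exponentiating yields `-1 = 1`.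
(It is the van Kampen obstruction of `K_{3,3}`.) Edges need not be injective, and adjacent edges may
meet arbitrarily.

**Combinatorics** (`no_K37_paths`). Let `H` be the graph on the seven vertices that joins `i` and
`j` when two independent edges of their stars cross. Each edge crosses at most one other, so degrees
in `H` are at most 3; as 7 is odd, the handshaking lemma gives a vertex `x` of degree at most 2,
hence four vertices not adjacent to `x`. By the `K_{3,3}` result every three vertices span an edge
of `H`, so these four are pairwise adjacent, and therefore the three edges at each of them cross the
three other stars bijectively. Say the edge from `w₁` to `a k` crosses the edge from `w₀` to `a l`,
with `k ≠ l`, at a point `z`, and let `h` be the one of the four whose star is crossed by the edge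
from `w₀` to `a k`; then `h ≠ w₁`. From `z` one reaches `a l` along the edge of `w₀`, the third
vertex `a m` through `w₀`, and `a k` along the edge of `w₁`. This star at `z` meets neither the star
of `x` nor that of `h` in independent edges, and together the three stars contradict the `K_{3,3}`
result.
-/

open Set


/-- A drawing of a simple graph `G` in the plane: an injective placement of vertices
together with, for each edge, a continuous injective curve between the points of its
endpoints, whose interior avoids all vertex points; any two distinct edge curves meet in
finitely many points, and no point lies in the interiors of three distinct edge curves. -/
structure Drawing {V : Type*} (G : SimpleGraph V) where
  pos : V → ℝ × ℝ
  pos_inj : Function.Injective pos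
  curve : G.edgeSet → ℝ → ℝ × ℝ
  curve_cont : ∀ e, ContinuousOn (curve e) (Icc 0 1)
  curve_inj : ∀ e, InjOn (curve e) (Icc 0 1)
  curve_ends : ∀ e : G.edgeSet, ∃ a b : V, (e : Sym2 V) = s(a, b) ∧
      curve e 0 = pos a ∧ curve e 1 = pos b
  interior_no_vertex : ∀ e, ∀ t ∈ Ioo (0 : ℝ) 1, ∀ v, curve e t ≠ pos v
  finite_meet : ∀ e f, e ≠ f → (curve e '' Icc 0 1 ∩ curve f '' Icc 0 1).Finite
  no_triple_point : ∀ p : ℝ × ℝ, ∀ e f g, e ≠ f → e ≠ g → f ≠ g →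
      p ∈ curve e '' Ioo 0 1 → p ∈ curve f '' Ioo 0 1 → p ∈ curve g '' Ioo 0 1 → False

/-- Two edges cross in a drawing if some point lies in the interiors of both curves. -/
def Drawing.Crosses {V : Type*} {G : SimpleGraph V} (D : Drawing G) (e f : G.edgeSet) : Prop :=
  e ≠ f ∧ ∃ p : ℝ × ℝ, p ∈ D.curve e '' Ioo 0 1 ∧ p ∈ D.curve f '' Ioo 0 1

/-- A drawing is almost planar (1-planar) if every edge crosses at most one other edge. -/
def Drawing.IsAlmostPlanar {V : Type*} {G : SimpleGraph V} (D : Drawing G) : Prop :=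
  ∀ e f g, D.Crosses e f → D.Crosses e g → f = g

/-- A graph is almost planar if it admits a drawing in which every edge crosses at most
one other edge. -/
def SimpleGraph.AlmostPlanar {V : Type*} (G : SimpleGraph V) : Prop :=
  ∃ D : Drawing G, D.IsAlmostPlanar

open scoped unitInterval

/-! ### Logarithmic variation and nonplanarity of `K_{3,3}` -/

theorem exists_continuous_log_square (K : I × I → ℂ) (hK : Continuous K) (h0 : ∀ p, K p ≠ 0) :
    ∃ G : I × I → ℂ, Continuous G ∧ ∀ p, Complex.exp (G p) = K p := by
  -- Extending `K` to the plane makes the domain contractible and locally path-connected.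
  obtain ⟨G, ⟨-, hG⟩, -⟩ := Complex.isCoveringMapOn_exp.existsUnique_continuousMap_lifts
    (⟨fun q : ℝ × ℝ => K (projIcc 0 1 zero_le_one q.1, projIcc 0 1 zero_le_one q.2),
      hK.comp (by fun_prop)⟩ : C(ℝ × ℝ, ℂ))
    (a₀ := (0, 0)) (Complex.exp_log (h0 _)) (fun q => h0 _)
  refine ⟨fun p => G (p.1, p.2), by fun_prop, fun p => ?_⟩
  simpa using congrFun hG (p.1, p.2)

theorem log_sub_const {G G' : I → ℂ} (hG : Continuous G) (hG' : Continuous G')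
    (h : ∀ t, Complex.exp (G t) = Complex.exp (G' t)) : G 1 - G 0 = G' 1 - G' 0 := by
  have cov := Complex.isCoveringMap_exp
  have key : (fun t => G t) = fun t => G' t + (G 0 - G' 0) := by
    refine cov.eq_of_comp_eq (by fun_prop) (by fun_prop) ?_ 0 (by ring)
    funext t
    apply Subtype.ext
    simp [Complex.exp_add, Complex.exp_sub, h]
  linear_combination congrFun key 1

open Classical in
/-- The total change of a continuous logarithm along the curve `c`; it does not depend on the chosen
logarithm. The value is `0` when `c` has no continuous logarithm. -/
noncomputable def logVar (c : I → ℂ) : ℂ :=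
  if h : ∃ G : I → ℂ, Continuous G ∧ ∀ t, Complex.exp (G t) = c t then
    h.choose 1 - h.choose 0 else 0

theorem logVar_eq {c G : I → ℂ} (hG : Continuous G) (h : ∀ t, Complex.exp (G t) = c t) :
    logVar c = G 1 - G 0 := by
  have hex : ∃ G : I → ℂ, Continuous G ∧ ∀ t, Complex.exp (G t) = c t := ⟨G, hG, h⟩
  rw [logVar, dif_pos hex]
  exact log_sub_const hex.choose_spec.1 hG fun t => (hex.choose_spec.2 t).trans (h t).symm

theorem exp_logVar {c : I → ℂ} (hc : Continuous c) (h0 : ∀ t, c t ≠ 0) :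
    Complex.exp (logVar c) = c 1 / c 0 := by
  obtain ⟨G, hG, hGc⟩ := exists_continuous_log_square (fun p => c p.1) (by fun_prop) fun p => h0 p.1
  rw [logVar_eq (G := fun t => G (t, 0)) (by fun_prop) fun t => hGc (t, 0), Complex.exp_sub, hGc, hGc]

/-- A logarithm of `c s - d t` on the unit square changes by the same amount along both ways from
the corner `(0, 0)` to `(1, 1)`. Replacing `c s - d t` by `d t - c s` does not affect the change. -/
theorem logVar_square (c d : I → ℂ) (hc : Continuous c) (hd : Continuous d)
    (h : ∀ s t, c s ≠ d t) :
    logVar (fun s => c s - d 0) + logVar (fun t => d t - c 1) =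
      logVar (fun t => d t - c 0) + logVar (fun s => c s - d 1) := by
  obtain ⟨G, hG, hGc⟩ := exists_continuous_log_square (fun p => c p.1 - d p.2) (by fun_prop)
    fun p => sub_ne_zero.2 (h p.1 p.2)
  have h1 (t : I) : logVar (fun s => c s - d t) = G (1, t) - G (0, t) :=
    logVar_eq (G := fun s => G (s, t)) (by fun_prop) fun s => hGc (s, t)
  have h2 (s : I) : logVar (fun t => d t - c s) = G (s, 1) - G (s, 0) := by
    rw [logVar_eq (G := fun t => G (s, t) + Real.pi * Complex.I) (by fun_prop) fun t => ?_]
    · ring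
    · rw [Complex.exp_add, Complex.exp_pi_mul_I, hGc]; ring
  rw [h1, h1, h2, h2]; ring

/-- In any continuous map of `K_{3,3}` to the plane, two independent edges meet. -/
theorem K33_independent_crossing (P Q : Fin 3 → ℂ) (γ : ∀ i j, Path (P i) (Q j))
    (h : ∀ i i' j j', i ≠ i' → j ≠ j' → Disjoint (range (γ i j)) (range (γ i' j'))) : False := by
  have hne : ∀ i i' j j', i ≠ i' → j ≠ j' → ∀ s t, γ i j s ≠ γ i' j' t := fun i i' j j' hi hj s t =>
    (h i i' j j' hi hj).ne_of_mem (mem_range_self s) (mem_range_self t)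
  have exj : ∀ j : Fin 3, ∃ j', j ≠ j' := by decide
  set A : Fin 3 → Fin 3 → Fin 3 → ℂ := fun i' i j => logVar fun t => γ i j t - P i' with hA
  set B : Fin 3 → Fin 3 → Fin 3 → ℂ := fun j' i j => logVar fun t => γ i j t - Q j' with hB
  have hsq : ∀ i i' j j', i ≠ i' → j ≠ j' →
      A i' i j + B j i' j' = A i i' j' + B j' i j := by
    intro i i' j j' hi hj
    simpa using logVar_square (γ i j) (γ i' j') (γ i j).continuous (γ i' j').continuous
      (hne i i' j j' hi hj)
  have hPQ : ∀ i j, Q j - P i ≠ 0 := by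
    intro i j
    obtain ⟨i', hi⟩ := exj i
    obtain ⟨j', hj⟩ := exj j
    simpa [sub_ne_zero] using hne i' i j j' hi.symm hj 1 0
  have hPP : ∀ i i', i ≠ i' → P i - P i' ≠ 0 := by
    intro i i' hi
    simpa [sub_ne_zero] using hne i i' 0 1 hi (by decide) 0 0
  have hQQ : ∀ j j', j ≠ j' → Q j - Q j' ≠ 0 := by
    intro j j' hj
    simpa [sub_ne_zero] using hne 0 1 j j' (by decide) hj 1 1
  have eA : ∀ i i' j, i ≠ i' → Complex.exp (A i' i j) = (Q j - P i') / (P i - P i') := by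
    intro i i' j hi
    obtain ⟨j', hj⟩ := exj j
    have := exp_logVar (c := fun t => γ i j t - P i') (by fun_prop) fun t => by
      simpa [sub_ne_zero] using hne i i' j j' hi hj t 0
    simpa using this
  have eB : ∀ i j j', j ≠ j' → Complex.exp (B j' i j) = (Q j - Q j') / (P i - Q j') := by
    intro i j j' hj
    obtain ⟨i', hi⟩ := exj i
    have := exp_logVar (c := fun t => γ i j t - Q j') (by fun_prop) fun t => by
      simpa [sub_ne_zero] using hne i i' j j' hi hj t 1
    simpa using this
  have eC : ∀ i i' j, i ≠ i' →
      Complex.exp (A i' i j - A i i' j) = -((Q j - P i') / (Q j - P i)) := by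
    intro i i' j hi
    have h1 := hPP i i' hi
    have h2 := hPQ i j
    rw [Complex.exp_sub, eA i i' j hi, eA i' i j hi.symm, ← neg_sub (P i) (P i')]
    field_simp
  have eD : ∀ j j', j ≠ j' →
      Complex.exp (B j' 2 j - B j' 0 j) = (Q j' - P 0) / (Q j' - P 2) := by
    intro j j' hj
    have h1 := hQQ j j' hj
    have h2 := hPQ 0 j'
    have h3 := hPQ 2 j'
    rw [Complex.exp_sub, eB 2 j j' hj, eB 0 j j' hj, ← neg_sub (Q j') (P 0), ← neg_sub (Q j') (P 2)]
    field_simp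
  -- Half the sum of the square relations, those with `i < i'` taken positively: `A i' i j` then
  -- occurs twice with the sign of `i' - i`, and the terms `B j' 1 j` cancel.
  have hsum : (∑ j, ((A 1 0 j - A 0 1 j) + (A 2 0 j - A 0 2 j) + (A 2 1 j - A 1 2 j))) +
      ((B 1 2 0 - B 1 0 0) + (B 2 2 0 - B 2 0 0) + (B 0 2 1 - B 0 0 1) + (B 2 2 1 - B 2 0 1)
        + (B 0 2 2 - B 0 0 2) + (B 1 2 2 - B 1 0 2)) = 0 := by
    have sq (i i' j j') (hi : i ≠ i' := by decide) (hj : j ≠ j' := by decide) :=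
      hsq i i' j j' hi hj
    simp only [Fin.sum_univ_three]
    linear_combination (1 / 2) * (sq 0 1 0 1 + sq 0 1 0 2 + sq 0 1 1 0 + sq 0 1 1 2 + sq 0 1 2 0
      + sq 0 1 2 1 + sq 0 2 0 1 + sq 0 2 0 2 + sq 0 2 1 0 + sq 0 2 1 2 + sq 0 2 2 0 + sq 0 2 2 1
      + sq 1 2 0 1 + sq 1 2 0 2 + sq 1 2 1 0 + sq 1 2 1 2 + sq 1 2 2 0 + sq 1 2 2 1)
  have hexp := congrArg Complex.exp hsum
  have C (i i' j) (hi : i ≠ i' := by decide) := eC i i' j hi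
  have D (j j') (hj : j ≠ j' := by decide) := eD j j' hj
  simp only [Fin.sum_univ_three, Complex.exp_add, Complex.exp_zero] at hexp
  rw [C 0 1 0, C 0 1 1, C 0 1 2, C 0 2 0, C 0 2 1, C 0 2 2, C 1 2 0, C 1 2 1, C 1 2 2,
    D 0 1, D 0 2, D 1 0, D 1 2, D 2 0, D 2 1] at hexp
  clear_value A B
  have h00 := hPQ 0 0
  have h01 := hPQ 0 1
  have h02 := hPQ 0 2
  have h10 := hPQ 1 0
  have h11 := hPQ 1 1
  have h12 := hPQ 1 2
  have h20 := hPQ 2 0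
  have h21 := hPQ 2 1
  have h22 := hPQ 2 2
  generalize Q 0 - P 0 = r00 at *
  generalize Q 1 - P 0 = r01 at *
  generalize Q 2 - P 0 = r02 at *
  generalize Q 0 - P 1 = r10 at *
  generalize Q 1 - P 1 = r11 at *
  generalize Q 2 - P 1 = r12 at *
  generalize Q 0 - P 2 = r20 at *
  generalize Q 1 - P 2 = r21 at *
  generalize Q 2 - P 2 = r22 at *
  field_simp at hexp
  norm_num at hexp

/-- `K33_independent_crossing` for three separately given stars with common leaves. -/
theorem three_stars_cross {p q r : ℂ} {Q : Fin 3 → ℂ} (α : ∀ j, Path p (Q j))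
    (β : ∀ j, Path q (Q j)) (δ : ∀ j, Path r (Q j))
    (h₁ : ∀ j j', j ≠ j' → Disjoint (range (α j)) (range (β j')))
    (h₂ : ∀ j j', j ≠ j' → Disjoint (range (α j)) (range (δ j')))
    (h₃ : ∀ j j', j ≠ j' → Disjoint (range (β j)) (range (δ j'))) : False := by
  let γ : ∀ i j, Path ((![p, q, r] : Fin 3 → ℂ) i) (Q j) := fun i j =>
    match i with
    | 0 => α j
    | 1 => β j
    | 2 => δ j
  refine K33_independent_crossing _ Q γ fun i i' j j' hi hj => ?_
  match i, i', hi with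
  | 0, 0, hi | 1, 1, hi | 2, 2, hi => exact absurd rfl hi
  | 0, 1, _ => exact h₁ j j' hj
  | 1, 0, _ => exact (h₁ j' j hj.symm).symm
  | 0, 2, _ => exact h₂ j j' hj
  | 2, 0, _ => exact (h₂ j' j hj.symm).symm
  | 1, 2, _ => exact h₃ j j' hj
  | 2, 1, _ => exact (h₃ j' j hj.symm).symm

/-! ### The combinatorial argument -/

/-- Here `X` abstracts the crossing relation between the edges `(i, k)`, from `v i` to `a k`.
Edges at different `v i` that do not cross meet at most in a common endpoint `a k`, the value of
both at parameter `1`. -/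
theorem no_K37_paths (v : Fin 7 → ℂ) (a : Fin 3 → ℂ) (γ : ∀ i k, Path (v i) (a k))
    (X : Fin 7 × Fin 3 → Fin 7 × Fin 3 → Prop)
    (hsymm : ∀ e f, X e f → X f e)
    (hone : ∀ e f g, X e f → X e g → f = g)
    (hmeet : ∀ e f, X e f → ∃ s t, t ≠ 1 ∧ γ e.1 e.2 s = γ f.1 f.2 t)
    (hX : ∀ i k j l, i ≠ j → ¬ X (i, k) (j, l) → ∀ s t, γ i k s = γ j l t →
      s = 1 ∧ k = l) : False := by
  classical
  -- `H` joins two of the seven vertices when their stars have a crossing of independent edges.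
  let H : SimpleGraph (Fin 7) :=
    { Adj := fun i j => i ≠ j ∧ ∃ k l, k ≠ l ∧ X (i, k) (j, l)
      symm := ⟨fun i j ⟨h, k, l, hkl, hx⟩ => ⟨h.symm, l, k, hkl.symm, hsymm _ _ hx⟩⟩
      loopless := ⟨fun i h => h.1 rfl⟩ }
  have hdisj : ∀ i j k l, i ≠ j → k ≠ l → ¬ X (i, k) (j, l) →
      Disjoint (range (γ i k)) (range (γ j l)) := by
    intro i j k l hij hkl hx
    rw [Set.disjoint_left]
    rintro _ ⟨s, rfl⟩ ⟨t, ht⟩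
    exact hkl (hX i k j l hij hx s t ht.symm).2
  have hdisj' : ∀ i j, i ≠ j → ¬ H.Adj i j → ∀ k l, k ≠ l →
      Disjoint (range (γ i k)) (range (γ j l)) := fun i j hij hH k l hkl =>
    hdisj i j k l hij hkl fun hx => hH ⟨hij, k, l, hkl, hx⟩
  -- Among any three vertices, two are adjacent in `H`.
  have htriple : ∀ x i j, x ≠ i → x ≠ j → i ≠ j → ¬ H.Adj x i → ¬ H.Adj x j → H.Adj i j := by
    intro x i j hxi hxj hij hi hj
    by_contra hc
    exact three_stars_cross (γ x) (γ i) (γ j) (hdisj' x i hxi hi) (hdisj' x j hxj hj)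
      (hdisj' i j hij hc)
  have hdeg : ∀ i, H.degree i ≤ 3 := by
    intro i
    have hk : ∀ j, ∃ k, H.Adj i j → ∃ l, X (i, k) (j, l) := by
      intro j
      by_cases h : H.Adj i j
      · obtain ⟨-, k, l, -, hx⟩ := h
        exact ⟨k, fun _ => ⟨l, hx⟩⟩
      · exact ⟨0, fun h' => absurd h' h⟩
    choose k hk using hk
    have := Finset.card_le_card_of_injOn (s := H.neighborFinset i) (t := Finset.univ) k
      (fun _ _ => Finset.mem_univ _) (by
        intro j hj j' hj' hjj
        simp only [Finset.mem_coe, SimpleGraph.mem_neighborFinset] at hj hj'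
        obtain ⟨l, hl⟩ := hk j hj
        obtain ⟨l', hl'⟩ := hk j' hj'
        simp only [hjj] at hl
        exact congrArg Prod.fst (hone _ _ _ hl hl'))
    simpa using this
  -- A 3-regular graph on 7 vertices would violate the handshaking lemma.
  obtain ⟨x, hx⟩ : ∃ x, H.degree x ≤ 2 := by
    by_contra! hc
    have h3 : ∀ i, H.degree i = 3 := fun i => le_antisymm (hdeg i) (hc i)
    have := H.even_card_odd_degree_vertices
    simp only [h3] at this
    revert this
    decide
  obtain ⟨f, hf⟩ : ∃ f : Fin 4 ↪ Fin 7, ∀ i, x ≠ f i ∧ ¬ H.Adj x (f i) := by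
    have hcard : 4 ≤ ((insert x (H.neighborFinset x))ᶜ).card := by
      rw [Finset.card_compl, Fintype.card_fin]
      have := Finset.card_insert_le x (H.neighborFinset x)
      rw [SimpleGraph.card_neighborFinset_eq_degree] at this
      omega
    obtain ⟨W, hW, hW4⟩ := Finset.exists_subset_card_eq hcard
    refine ⟨(W.orderEmbOfFin hW4).toEmbedding, fun i => ?_⟩
    have := hW (W.orderEmbOfFin_mem hW4 i)
    simp only [Finset.mem_compl, Finset.mem_insert, SimpleGraph.mem_neighborFinset, not_or] at this
    exact ⟨fun h => this.1 h.symm, this.2⟩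
  have hcross : ∀ i j, ∃ k l, i ≠ j → k ≠ l ∧ X (f i, k) (f j, l) := by
    intro i j
    by_cases hij : i = j
    · exact ⟨0, 0, fun h => absurd hij h⟩
    · obtain ⟨-, k, l, hkl, hX⟩ := htriple x (f i) (f j) (hf i).1 (hf j).1
        (fun h => hij (f.injective h)) (hf i).2 (hf j).2
      exact ⟨k, l, fun _ => ⟨hkl, hX⟩⟩
  choose c d hcd using hcross
  -- Each of the three edges at `f i` crosses exactly one of the three other stars.
  have hsurj : ∀ i k, ∃ j, i ≠ j ∧ c i j = k := by
    intro i k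
    have := Finset.surjOn_of_injOn_of_card_le (s := Finset.univ.erase i) (t := Finset.univ) (c i)
      (fun _ _ => Finset.mem_coe.2 (Finset.mem_univ _)) (by
        intro j hj j' hj' hjj
        simp only [Finset.coe_erase, Finset.coe_univ, mem_sdiff, mem_univ, true_and,
          mem_singleton_iff] at hj hj'
        have h1 := (hcd i j (Ne.symm hj)).2
        have h2 := (hcd i j' (Ne.symm hj')).2
        rw [hjj] at h1
        exact f.injective (congrArg Prod.fst (hone _ _ _ h1 h2))) (by simp)
    obtain ⟨j, hj, hjk⟩ := this (Finset.mem_coe.2 (Finset.mem_univ k))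
    exact ⟨j, by simpa [eq_comm] using hj, hjk⟩
  have hd : ∀ i j, i ≠ j → d i j = c j i := by
    intro i j hij
    obtain ⟨h, hjh, hh⟩ := hsurj j (d i j)
    have h1 := hsymm _ _ (hcd i j hij).2
    have h2 := (hcd j h hjh).2
    rw [hh] at h2
    have : h = i := (f.injective (congrArg Prod.fst (hone _ _ _ h1 h2))).symm
    rw [← hh, this]
  have hX01 := (hcd 0 1 (by decide)).2
  have hlk := (hcd 0 1 (by decide)).1
  rw [hd 0 1 (by decide)] at hX01 hlk
  set l := c 0 1
  set k := c 1 0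
  obtain ⟨h, h0h, hch⟩ := hsurj 0 k
  have h1h : (1 : Fin 4) ≠ h := by
    rintro rfl
    exact hlk hch
  obtain ⟨m, hmk, hml, hm⟩ : ∃ m : Fin 3, m ≠ k ∧ m ≠ l ∧ ∀ b, b = k ∨ b = l ∨ b = m := by
    revert hlk
    generalize k = k, l = l
    revert k l
    decide
  obtain ⟨g, h0g, hcg⟩ := hsurj 0 m
  have hXg := (hcd 0 g h0g).2
  rw [hcg] at hXg
  have hgh : g ≠ h := by
    rintro rfl
    exact hmk (hcg.symm.trans hch)
  obtain ⟨s, t, ht1, hst⟩ := hmeet _ _ (hsymm _ _ hX01)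
  simp only at hst
  -- The stars of `x` and `f h`, which the rerouted star centred at the crossing point must avoid.
  have hU : ∀ u, u = x ∨ u = f h → f 0 ≠ u ∧ f 1 ≠ u ∧ (∀ b, ¬ X (f 0, l) (u, b)) ∧
      (∀ b, b ≠ m → ¬ X (f 0, m) (u, b)) ∧ ∀ b, ¬ X (f 1, k) (u, b) := by
    intro u hu
    have h0 : f 0 ≠ u := by
      rcases hu with rfl | rfl
      · exact (hf 0).1.symm
      · exact fun e => h0h (f.injective e)
    have h1 : f 1 ≠ u := by
      rcases hu with rfl | rfl
      · exact (hf 1).1.symm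
      · exact fun e => h1h (f.injective e)
    refine ⟨h0, h1, fun b hb => ?_, fun b hbm hb => ?_, fun b hb => ?_⟩
    · exact h1 (congrArg Prod.fst (hone _ _ _ hX01 hb))
    · rcases hu with rfl | rfl
      · exact (hf 0).2 (H.adj_symm ⟨h0, m, b, hbm.symm, hb⟩)
      · exact hgh (f.injective (congrArg Prod.fst (hone _ _ _ hXg hb)))
    · exact h0 (congrArg Prod.fst (hone _ _ _ (hsymm _ _ hX01) hb))
  -- The star centred at the crossing point.
  have hδ : ∀ b, ∃ p : Path (γ (f 0) l t) (a b), ∀ u, u = x ∨ u = f h → ∀ b', b' ≠ b →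
      Disjoint (range (γ u b')) (range p) := by
    intro b
    rcases hm b with rfl | rfl | rfl
    · refine ⟨((γ (f 1) k).subpath s 1).cast hst.symm (by simp), fun u hu b' hb => ?_⟩
      obtain ⟨h0, h1, -, -, hc⟩ := hU u hu
      refine (hdisj (f 1) u k b' h1 hb.symm (hc b')).symm.mono_right ?_
      simp
    · refine ⟨((γ (f 0) l).subpath t 1).cast rfl (by simp), fun u hu b' hb => ?_⟩
      obtain ⟨h0, h1, hc, -, -⟩ := hU u hu
      refine (hdisj (f 0) u l b' h0 hb.symm (hc b')).symm.mono_right ?_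
      simp
    · refine ⟨(((γ (f 0) l).subpath t 0).cast rfl (by simp)).trans (γ (f 0) b),
        fun u hu b' hb => ?_⟩
      obtain ⟨h0, h1, hc, hc', -⟩ := hU u hu
      rw [Path.trans_range, disjoint_union_right]
      refine ⟨?_, (hdisj (f 0) u b b' h0 hb.symm (hc' b' hb)).symm⟩
      -- The part of the edge `f 0 → a l` before the crossing point does not contain `a l`.
      rw [Set.disjoint_right]
      rintro y hy ⟨τ, rfl⟩
      simp only [Path.cast_coe, Path.range_subpath] at hy
      obtain ⟨ρ, hρ, hρτ⟩ := hy
      have h1 := (hX (f 0) l u b' h0 (hc b') ρ τ hρτ).1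
      subst h1
      rw [uIcc_of_ge (show (0 : I) ≤ t from t.2.1)] at hρ
      exact ht1 (le_antisymm t.2.2 hρ.2)
  choose δ hδ using hδ
  exact three_stars_cross (γ x) (γ (f h)) δ
    (hdisj' x (f h) (hf h).1 (hf h).2)
    (fun j j' hj => hδ j' x (Or.inl rfl) j hj)
    (fun j j' hj => hδ j' (f h) (Or.inr rfl) j hj)

/-! ### From drawings to paths in `ℂ` -/

/-- The identification of the plane with `ℂ`. -/
noncomputable def toComplex : (ℝ × ℝ) ≃ₜ ℂ := Complex.equivRealProdCLM.symm.toHomeomorph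

/-- An edge curve, oriented from `u` to `w`, as a path in `ℂ`; interior parameters of the path
correspond to interior parameters of the curve. -/
theorem Drawing.exists_path {V : Type*} {G : SimpleGraph V} (D : Drawing G) (e : G.edgeSet)
    (u w : V) (he : (e : Sym2 V) = s(u, w)) :
    ∃ p : Path (toComplex (D.pos u)) (toComplex (D.pos w)),
      (∀ t, t ≠ 0 → t ≠ 1 → ∃ τ ∈ Ioo (0 : ℝ) 1, p t = toComplex (D.curve e τ)) ∧
      ∀ τ ∈ Ioo (0 : ℝ) 1, ∃ t, t ≠ 0 ∧ t ≠ 1 ∧ p t = toComplex (D.curve e τ) := by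
  obtain ⟨a, b, hab, h0, h1⟩ := D.curve_ends e
  let p : Path (toComplex (D.pos a)) (toComplex (D.pos b)) :=
    { toFun := fun t => toComplex (D.curve e t)
      continuous_toFun := toComplex.continuous.comp
        (continuousOn_iff_continuous_domRestrict.1 (D.curve_cont e))
      source' := by simp [h0]
      target' := by simp [h1] }
  have hp : (∀ t, t ≠ 0 → t ≠ 1 → ∃ τ ∈ Ioo (0 : ℝ) 1, p t = toComplex (D.curve e τ)) ∧
      ∀ τ ∈ Ioo (0 : ℝ) 1, ∃ t, t ≠ 0 ∧ t ≠ 1 ∧ p t = toComplex (D.curve e τ) := by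
    refine ⟨fun t ht0 ht1 => ⟨t, ⟨?_, ?_⟩, rfl⟩, fun τ hτ => ⟨⟨τ, hτ.1.le, hτ.2.le⟩, ?_, ?_, rfl⟩⟩
    · exact unitInterval.pos_iff_ne_zero.2 ht0
    · exact unitInterval.lt_one_iff_ne_one.2 ht1
    · exact fun h => hτ.1.ne' (congrArg Subtype.val h)
    · exact fun h => hτ.2.ne (congrArg Subtype.val h)
  rcases Sym2.eq_iff.1 (he.symm.trans hab) with ⟨rfl, rfl⟩ | ⟨rfl, rfl⟩
  · exact ⟨p, hp⟩
  · refine ⟨p.symm, fun t ht0 ht1 => ?_, fun τ hτ => ?_⟩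
    · exact hp.1 (unitInterval.symm t) (by simpa using ht1) (by simpa using ht0)
    · obtain ⟨t, ht0, ht1, ht⟩ := hp.2 τ hτ
      exact ⟨unitInterval.symm t, by simpa using ht1, by simpa using ht0, by simpa using ht⟩

/-- The complete bipartite graph `K_{3,7}` is not almost planar. -/
theorem K37_not_almostPlanar :
    ¬ (completeBipartiteGraph (Fin 3) (Fin 7)).AlmostPlanar := by
  rintro ⟨D, hD⟩
  let E : Fin 7 × Fin 3 → (completeBipartiteGraph (Fin 3) (Fin 7)).edgeSet := fun e =>
    ⟨s(Sum.inr e.1, Sum.inl e.2), by simp⟩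
  have hE : Function.Injective E := by
    rintro ⟨i, k⟩ ⟨j, l⟩ h
    simpa [E] using h
  choose γ hγ hγ' using fun i k => D.exists_path (E (i, k)) _ _ rfl
  have hvertex : ∀ i k t u, t ≠ 0 → t ≠ 1 → γ i k t ≠ toComplex (D.pos u) := by
    intro i k t u h0 h1 h
    obtain ⟨τ, hτ, hh⟩ := hγ i k t h0 h1
    exact D.interior_no_vertex _ τ hτ u (toComplex.injective (hh.symm.trans h))
  have hpos : ∀ u w, toComplex (D.pos u) = toComplex (D.pos w) → u = w := fun u w h =>
    D.pos_inj (toComplex.injective h)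
  refine no_K37_paths (fun i => toComplex (D.pos (Sum.inr i)))
    (fun k => toComplex (D.pos (Sum.inl k))) γ (fun e f => D.Crosses (E e) (E f)) ?_ ?_ ?_ ?_
  · rintro e f ⟨h, q, h1, h2⟩
    exact ⟨h.symm, q, h2, h1⟩
  · exact fun e f g h1 h2 => hE (hD _ _ _ h1 h2)
  · rintro ⟨i, k⟩ ⟨j, l⟩ ⟨-, q, ⟨ρ, hρ, rfl⟩, ⟨τ, hτ, h⟩⟩
    obtain ⟨s, -, -, hs⟩ := hγ' i k ρ hρ
    obtain ⟨t, -, ht, ht'⟩ := hγ' j l τ hτ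
    exact ⟨s, t, ht, by rw [hs, ht', h]⟩
  · intro i k j l hij hX s t hst
    by_cases hs0 : s = 0
    · subst hs0
      rw [Path.source] at hst
      by_cases ht0 : t = 0
      · subst ht0
        rw [Path.source] at hst
        exact absurd (Sum.inr_injective (hpos _ _ hst)) hij
      by_cases ht1 : t = 1
      · subst ht1
        rw [Path.target] at hst
        exact absurd (hpos _ _ hst) (by simp)
      exact absurd hst.symm (hvertex j l t _ ht0 ht1)
    by_cases hs1 : s = 1
    · refine ⟨hs1, ?_⟩
      subst hs1
      rw [Path.target] at hst
      by_cases ht0 : t = 0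
      · subst ht0
        rw [Path.source] at hst
        exact absurd (hpos _ _ hst) (by simp)
      by_cases ht1 : t = 1
      · subst ht1
        rw [Path.target] at hst
        exact Sum.inl_injective (hpos _ _ hst)
      exact absurd hst.symm (hvertex j l t _ ht0 ht1)
    by_cases ht0 : t = 0
    · subst ht0
      rw [Path.source] at hst
      exact absurd hst (hvertex i k s _ hs0 hs1)
    by_cases ht1 : t = 1
    · subst ht1
      rw [Path.target] at hst
      exact absurd hst (hvertex i k s _ hs0 hs1)
    obtain ⟨ρ, hρ, hs⟩ := hγ i k s hs0 hs1
    obtain ⟨τ, hτ, ht⟩ := hγ j l t ht0 ht1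
    refine absurd ⟨fun h => hij (congrArg Prod.fst (hE h)), _, ⟨ρ, hρ, rfl⟩, τ, hτ, ?_⟩ hX
    exact toComplex.injective (by rw [← hs, ← ht, hst])
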